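/- Let f be the local rule of width 4 with code number 60200, and define g : ℤ^4 → ℤ by g(x_0,x_1,x_2,x_3) = x_1 − 1 + Θ(x_2 − x_1 − 2) − δ_{1, x_2 − x_1}·Θ(x_1 − x_0 − 1). Then for every strictly increasing s : ℤ → ℤ, the function t = g_{∞,1}(s) is strictly increasing and φ(t) = f_∞(φ(s)). -/

import Mathlib

/-- For a (strictly increasing) `s : ℤ → ℤ`, `phi s` is the occupancy bisequence:
`phi s i = 1` iff `i` lies in the range of `s`. -/
noncomputable def phi (s : ℤ → ℤ) (i : ℤ) : Fin 2 :=
  haveI := Classical.propDecidable (i ∈ Set.range s)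
  if i ∈ Set.range s then 1 else 0

/-- The local rule of width 4 with code number `C`: `f(x₁,x₂,x₃,x₄)` is the
binary digit of `C` at position `8x₁ + 4x₂ + 2x₃ + x₄`. -/
def ruleOfCode (C : ℕ) (x : Fin 4 → Fin 2) : Fin 2 :=
  if C.testBit (8 * (x 0 : ℕ) + 4 * (x 1 : ℕ) + 2 * (x 2 : ℕ) + (x 3 : ℕ)) then 1 else 0

/-- The step function: `Θ(m) = 1` if `m > 0` and `Θ(m) = 0` otherwise. -/
def theta (m : ℤ) : ℤ := if 0 < m then 1 else 0

/-- The delta function: `δ_{m,n} = 1` if `m = n` and `δ_{m,n} = 0` otherwise. -/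
def deltaZ (m k : ℤ) : ℤ := if m = k then 1 else 0

theorem next_le {s : ℤ → ℤ} (hs : StrictMono s) {k j : ℤ} (h : s k < s j) : s (k + 1) ≤ s j :=
  hs.monotone (hs.lt_iff_lt.1 h)

theorem le_prev {s : ℤ → ℤ} (hs : StrictMono s) {k j : ℤ} (h : s j < s k) : s j ≤ s (k - 1) :=
  hs.monotone (by have := hs.lt_iff_lt.1 h; omega)

/-- The image of particle `k`, described by the gaps. -/
theorem image_cases (a b c : ℤ) (h1 : a < b) (h2 : b < c) :
    (2 < c - b ∧ b - 1 + theta (c - b - 2) - deltaZ 1 (c - b) * theta (b - a - 1) = b) ∨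
    (c = b + 2 ∧ b - 1 + theta (c - b - 2) - deltaZ 1 (c - b) * theta (b - a - 1) = b - 1) ∨
    (c = b + 1 ∧ a = b - 1 ∧
      b - 1 + theta (c - b - 2) - deltaZ 1 (c - b) * theta (b - a - 1) = b - 1) ∨
    (c = b + 1 ∧ a < b - 1 ∧
      b - 1 + theta (c - b - 2) - deltaZ 1 (c - b) * theta (b - a - 1) = b - 2) := by
  unfold theta deltaZ
  split_ifs <;> omega

theorem range_iff {s : ℤ → ℤ} (hs : StrictMono s) (i : ℤ) :
    i ∈ Set.range (fun i : ℤ => s i - 1 + theta (s (i + 1) - s i - 2) - deltaZ 1 (s (i + 1) - s i) * theta (s i - s (i - 1) - 1)) ↔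
      (i ∈ Set.range s ∧ i + 1 ∉ Set.range s ∧ i + 2 ∉ Set.range s) ∨
      (i + 1 ∈ Set.range s ∧ i + 2 ∉ Set.range s ∧ i + 3 ∈ Set.range s) ∨
      (i ∈ Set.range s ∧ i + 1 ∈ Set.range s ∧ i + 2 ∈ Set.range s) ∨
      (i + 1 ∉ Set.range s ∧ i + 2 ∈ Set.range s ∧ i + 3 ∈ Set.range s) := by
  have key := fun k : ℤ => image_cases (s (k - 1)) (s k) (s (k + 1)) (hs (by omega)) (hs (by omega))
  have no : ∀ k x : ℤ, s k < x → x < s (k + 1) → x ∉ Set.range s := by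
    rintro k x h1 h2 ⟨j, rfl⟩
    have := next_le hs h1
    omega
  have no' : ∀ k x : ℤ, s (k - 1) < x → x < s k → x ∉ Set.range s := by
    rintro k x h1 h2 ⟨j, rfl⟩
    have := le_prev hs h2
    omega
  constructor
  · rintro ⟨k, hk⟩
    dsimp only at hk
    rcases key k with ⟨h, e⟩ | ⟨h, e⟩ | ⟨h, h', e⟩ | ⟨h, h', e⟩ <;> rw [e] at hk
    · exact Or.inl ⟨⟨k, hk⟩, no k _ (by omega) (by omega), no k _ (by omega) (by omega)⟩
    · exact Or.inr (Or.inl ⟨⟨k, by omega⟩, no k _ (by omega) (by omega), ⟨k + 1, by omega⟩⟩)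
    · exact Or.inr (Or.inr (Or.inl ⟨⟨k - 1, by omega⟩, ⟨k, by omega⟩, ⟨k + 1, by omega⟩⟩))
    · exact Or.inr (Or.inr (Or.inr ⟨no' k _ (by omega) (by omega), ⟨k, by omega⟩, ⟨k + 1, by omega⟩⟩))
  · have nx : ∀ k, s k < s (k + 1) := fun k => hs (by omega)
    have pv : ∀ k, s (k - 1) < s k := fun k => hs (by omega)
    rintro (⟨⟨k, hk⟩, h1, h2⟩ | ⟨⟨k, hk⟩, h1, ⟨l, hl⟩⟩ | ⟨⟨j, hj⟩, ⟨k, hk⟩, ⟨l, hl⟩⟩ | ⟨h1, ⟨k, hk⟩, ⟨l, hl⟩⟩) <;>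
      refine ⟨k, ?_⟩ <;> dsimp only <;> have a := nx k <;> have b := pv k
    · have n1 : s (k + 1) ≠ i + 1 := fun h => h1 ⟨_, h⟩
      have n2 : s (k + 1) ≠ i + 2 := fun h => h2 ⟨_, h⟩
      have := key k
      omega
    · have n1 : s (k + 1) ≠ i + 2 := fun h => h1 ⟨_, h⟩
      have n2 : s (k + 1) ≤ s l := next_le hs (by omega)
      have := key k
      omega
    · have n1 : s j ≤ s (k - 1) := le_prev hs (by omega)
      have n2 : s (k + 1) ≤ s l := next_le hs (by omega)
      have := key k
      omega
    · have n1 : s (k - 1) ≠ i + 1 := fun h => h1 ⟨_, h⟩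
      have n2 : s (k + 1) ≤ s l := next_le hs (by omega)
      have := key k
      omega

theorem mem_range_iff (s : ℤ → ℤ) (i : ℤ) : i ∈ Set.range s ↔ phi s i = 1 := by
  unfold phi
  by_cases h : i ∈ Set.range s
  · rw [if_pos h]; simp only [h]
  · rw [if_neg h]; simp [h]

set_option synthInstance.maxSize 4096 in
set_option synthInstance.maxHeartbeats 400000 in
theorem rule_table : ∀ y a b c d : Fin 2,
    (y = 1 ↔ (a = 1 ∧ ¬ b = 1 ∧ ¬ c = 1) ∨ (b = 1 ∧ ¬ c = 1 ∧ d = 1) ∨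
      (a = 1 ∧ b = 1 ∧ c = 1) ∨ (¬ b = 1 ∧ c = 1 ∧ d = 1)) →
    y = ruleOfCode 60200 ![a, b, c, d] := by
  decide

/-- For the conservative 4-input rule with code number 60200 and the particle
mapping `g(x₀,x₁,x₂,x₃) = x₁ - 1 + Θ(x₂ - x₁ - 2) - δ_{1, x₂ - x₁}·Θ(x₁ - x₀ - 1)`: for every strictly increasing `s : ℤ → ℤ`,
the bisequence `t = g_{∞,1}(s)`, `t i = g (s (i-1)) (s i) (s (i+1)) (s (i+2))`,
is strictly increasing and `φ(t) = f_∞(φ(s))`. -/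
theorem stmt_17 (s : ℤ → ℤ) (hs : StrictMono s) :
    StrictMono (fun i : ℤ => s i - 1 + theta (s (i + 1) - s i - 2) - deltaZ 1 (s (i + 1) - s i) * theta (s i - s (i - 1) - 1)) ∧
    ∀ i : ℤ,
      phi (fun i : ℤ => s i - 1 + theta (s (i + 1) - s i - 2) - deltaZ 1 (s (i + 1) - s i) * theta (s i - s (i - 1) - 1)) i =
        ruleOfCode 60200 (fun k : Fin 4 => phi s (i + (k : ℕ))) := by
  constructor
  · refine strictMono_int_of_lt_succ fun k => ?_
    have k1 := image_cases (s (k - 1)) (s k) (s (k + 1)) (hs (by omega)) (hs (by omega))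
    have k2 := image_cases (s (k + 1 - 1)) (s (k + 1)) (s (k + 1 + 1)) (hs (by omega)) (hs (by omega))
    have e : s (k + 1 - 1) = s k := by congr 1; omega
    omega
  · intro i
    have h := range_iff hs i
    simp only [mem_range_iff] at h
    have e : ruleOfCode 60200 (fun k : Fin 4 => phi s (i + (k : ℕ))) =
        ruleOfCode 60200 ![phi s i, phi s (i + 1), phi s (i + 2), phi s (i + 3)] := by
      congr 1
      funext k
      fin_cases k <;> simp
    rw [e]
    exact rule_table _ _ _ _ _ h
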